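/- Let X be a measurable space, let S and T be probability measures on X (the source and target domains), and let f : X → Bool be a measurable labeling function. Let H be a nonempty set of measurable hypotheses h : X → Bool, and assume the supremum defining d_{HΔH}(S,T) exists (e.g. H is such that the set of values is bounded above; note each value lies in [0,2]). For a domain D ∈ {S,T} and hypothesis h, define the risk R_D(h) = ∫ 1[h(x) ≠ f(x)] dD(x). Define the HΔH-distance d_{HΔH}(S,T) = 2 · sup_{h,h' ∈ H} | ∫ 1[h(x) ≠ h'(x)] dS(x) − ∫ 1[h(x) ≠ h'(x)] dT(x) |, and the ideal joint error λ = inf_{h' ∈ H} ( R_S(h') + R_T(h') ). Then for every h ∈ H: R_T(h) ≤ R_S(h) + (1/2) · d_{HΔH}(S,T) + λ. -/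

import Mathlib

open MeasureTheory

/-- 0-1 disagreement risk of two Boolean-valued functions under a measure `D`:
the integral of the indicator of the set where they differ. -/
noncomputable def disagreeRisk {X : Type*} [MeasurableSpace X]
    (D : Measure X) (g h : X → Bool) : ℝ :=
  ∫ x, (if g x ≠ h x then (1 : ℝ) else 0) ∂D

/-- The HΔH-distance between two measures `S` and `T` with respect to a
hypothesis class `H`. -/
noncomputable def dHDeltaH {X : Type*} [MeasurableSpace X]
    (S T : Measure X) (H : Set (X → Bool)) : ℝ :=
  2 * sSup {r : ℝ | ∃ h ∈ H, ∃ h' ∈ H,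
    r = |disagreeRisk S h h' - disagreeRisk T h h'|}

/-- The ideal joint error `λ`: the infimum over hypotheses in `H` of the sum of
the source and target risks with respect to the labeling function `f`. -/
noncomputable def idealJointError {X : Type*} [MeasurableSpace X]
    (S T : Measure X) (H : Set (X → Bool)) (f : X → Bool) : ℝ :=
  sInf {r : ℝ | ∃ h' ∈ H, r = disagreeRisk S h' f + disagreeRisk T h' f}

/-! Disagreement risk is a pseudometric on measurable Boolean functions. On the target domain, pass
from `h` to `f` through an arbitrary `h' ∈ H`; the leg from `h` to `h'` compares two hypotheses, so
moving it to the source costs at most half the HΔH-distance, and there it is split again through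
`f`. The infimum over `h'` produces the ideal joint error. -/

section DisagreeRisk

variable {X : Type*} [MeasurableSpace X] {D : Measure X} {g h k : X → Bool}

theorem disagreeRisk_eq_measureReal (hg : AEMeasurable g D) (hh : AEMeasurable h D) :
    disagreeRisk D g h = D.real {x | g x ≠ h x} := by
  have hgh : NullMeasurableSet {x | g x ≠ h x} D := (nullMeasurableSet_eq_fun hg hh).compl
  calc disagreeRisk D g h
      = ∫ x, {x | g x ≠ h x}.indicator (fun _ => (1 : ℝ)) x ∂D := by
        simp only [disagreeRisk, Set.indicator_apply, Set.mem_ofPred_eq]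
    _ = D.real {x | g x ≠ h x} := by
        rw [integral_indicator₀ hgh, setIntegral_const, smul_eq_mul, mul_one]

theorem disagreeRisk_comm (D : Measure X) (g h : X → Bool) :
    disagreeRisk D g h = disagreeRisk D h g := by
  simp only [disagreeRisk, ne_comm]

theorem disagreeRisk_nonneg (D : Measure X) (g h : X → Bool) : 0 ≤ disagreeRisk D g h :=
  integral_nonneg fun _ => ite_nonneg zero_le_one le_rfl

theorem disagreeRisk_le_measureReal_univ (D : Measure X) [IsFiniteMeasure D] (g h : X → Bool) :
    disagreeRisk D g h ≤ D.real Set.univ :=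
  calc disagreeRisk D g h
      ≤ ∫ _, (1 : ℝ) ∂D := by
        exact integral_mono_of_nonneg (.of_forall fun _ => ite_nonneg zero_le_one le_rfl)
          (integrable_const 1) (.of_forall fun _ => ite_le_one le_rfl zero_le_one)
    _ = D.real Set.univ := by rw [integral_const, smul_eq_mul, mul_one]

theorem disagreeRisk_triangle [IsFiniteMeasure D]
    (hg : AEMeasurable g D) (hh : AEMeasurable h D) (hk : AEMeasurable k D) :
    disagreeRisk D g k ≤ disagreeRisk D g h + disagreeRisk D h k := by
  rw [disagreeRisk_eq_measureReal hg hk, disagreeRisk_eq_measureReal hg hh,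
    disagreeRisk_eq_measureReal hh hk]
  have hsub : {x | g x ≠ k x} ⊆ {x | g x ≠ h x} ∪ {x | h x ≠ k x} := by
    intro x hx
    exact (Ne.ne_or_ne (h x) hx).imp_right Ne.symm
  exact (measureReal_mono hsub).trans (measureReal_union_le _ _)

end DisagreeRisk

section DomainAdaptation

variable {X : Type*} [MeasurableSpace X]
  (S T : Measure X) [IsFiniteMeasure S] [IsFiniteMeasure T]
  {H : Set (X → Bool)} {f h h' : X → Bool}

theorem bddAbove_abs_disagreeRisk_sub (H : Set (X → Bool)) :
    BddAbove {r : ℝ | ∃ h ∈ H, ∃ h' ∈ H, r = |disagreeRisk S h h' - disagreeRisk T h h'|} := by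
  refine ⟨max (S.real Set.univ) (T.real Set.univ), ?_⟩
  rintro _ ⟨h, -, h', -, rfl⟩
  exact abs_sub_le_of_nonneg_of_le
    (disagreeRisk_nonneg S h h') (le_max_of_le_left (disagreeRisk_le_measureReal_univ S h h'))
    (disagreeRisk_nonneg T h h') (le_max_of_le_right (disagreeRisk_le_measureReal_univ T h h'))

theorem abs_disagreeRisk_sub_le_half_dHDeltaH (hh : h ∈ H) (hh' : h' ∈ H) :
    |disagreeRisk S h h' - disagreeRisk T h h'| ≤ (1 / 2) * dHDeltaH S T H := by
  have hsup := le_csSup (bddAbove_abs_disagreeRisk_sub S T H) ⟨h, hh, h', hh', rfl⟩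
  rw [dHDeltaH]
  linarith

variable {S T}

theorem disagreeRisk_le_add_half_dHDeltaH_add (hf : AEMeasurable f (S + T))
    (hmh : AEMeasurable h (S + T)) (hmh' : AEMeasurable h' (S + T)) (hh : h ∈ H) (hh' : h' ∈ H) :
    disagreeRisk T h f ≤ disagreeRisk S h f + (1 / 2) * dHDeltaH S T H +
      (disagreeRisk S h' f + disagreeRisk T h' f) := by
  obtain ⟨hfS, hfT⟩ := aemeasurable_add_measure_iff.1 hf
  obtain ⟨hhS, hhT⟩ := aemeasurable_add_measure_iff.1 hmh
  obtain ⟨hhS', hhT'⟩ := aemeasurable_add_measure_iff.1 hmh'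
  have htarget : disagreeRisk T h f ≤ disagreeRisk T h h' + disagreeRisk T h' f :=
    disagreeRisk_triangle hhT hhT' hfT
  have hshift : disagreeRisk T h h' ≤ disagreeRisk S h h' + (1 / 2) * dHDeltaH S T H := by
    linarith [(abs_le.1 (abs_disagreeRisk_sub_le_half_dHDeltaH S T hh hh')).1]
  have hsource : disagreeRisk S h h' ≤ disagreeRisk S h f + disagreeRisk S h' f := by
    rw [disagreeRisk_comm S h' f]
    exact disagreeRisk_triangle hhS hfS hhS'
  linarith

theorem ben_david_bound_general (hf : AEMeasurable f (S + T))
    (hmeas : ∀ h ∈ H, AEMeasurable h (S + T)) (hh : h ∈ H) :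
    disagreeRisk T h f ≤
      disagreeRisk S h f + (1 / 2) * dHDeltaH S T H + idealJointError S T H f := by
  rw [← sub_le_iff_le_add']
  refine le_csInf ⟨_, h, hh, rfl⟩ ?_
  rintro _ ⟨h', hh', rfl⟩
  rw [sub_le_iff_le_add']
  exact disagreeRisk_le_add_half_dHDeltaH_add hf (hmeas h hh) (hmeas h' hh') hh hh'

end DomainAdaptation

/-- **Ben-David et al. domain adaptation bound.**
For every hypothesis `h ∈ H`, the target risk is bounded by the source risk
plus half the HΔH-distance plus the ideal joint error. -/
theorem ben_david_bound
    {X : Type*} [MeasurableSpace X]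
    (S T : Measure X) [IsProbabilityMeasure S] [IsProbabilityMeasure T]
    (f : X → Bool) (hf : Measurable f)
    (H : Set (X → Bool)) (hH : H.Nonempty)
    (hmeas : ∀ h ∈ H, Measurable h)
    (hbdd : BddAbove {r : ℝ | ∃ h ∈ H, ∃ h' ∈ H,
      r = |disagreeRisk S h h' - disagreeRisk T h h'|}) :
    ∀ h ∈ H,
      disagreeRisk T h f ≤
        disagreeRisk S h f + (1 / 2) * dHDeltaH S T H + idealJointError S T H f :=
  fun _ hh => ben_david_bound_general hf.aemeasurable (fun h hh => (hmeas h hh).aemeasurable) hh
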